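/- Let G₁, G₂ ⊆ ℂⁿ be bounded complete n-circled domains, and suppose that for every k ∈ M there is ρ(k) ∈ (ℝ_{>0})ⁿ such that P(ρ(k)) ⊆ G₁ and |z^k| ≤ ρ(k)^k for every z ∈ G₁. Assume every function holomorphic on G₁ admits a monomial expansion, i.e. for every f holomorphic on G₁ there is c : ℕⁿ → ℂ such that for all z ∈ G₁ the family (c_m z^m)_{m∈ℕⁿ} is absolutely summable with sum f(z). For each k ∈ M let A_k : ((Fin n → ℂ) → ℂ) →ₗ[ℂ] ((Fin n → ℂ) → ℂ) be a ℂ-linear map such that A_k f is holomorphic on G₂ whenever f is holomorphic on P(ρ(k)), and suppose that for every t ∈ (0,1) there exist C > 0 and s ∈ (0,1) such that for every k ∈ M and every f holomorphic on P(ρ(k)): ‖A_k f‖_{t•closure(G₂)} ≤ C · ‖f‖_{s•closure(P(ρ(k)))}. Then there exists a ℂ-linear map A : ((Fin n → ℂ) → ℂ) →ₗ[ℂ] ((Fin n → ℂ) → ℂ) such that: (i) for every f holomorphic on G₁, A f is holomorphic on G₂; (ii) for every t ∈ (0,1) there exist C' > 0 and r ∈ (0,1) with ‖A f‖_{t•closure(G₂)}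 ≤ C' ‖f‖_{r•closure(G₁)} for every f holomorphic on G₁; and (iii) for every k ∈ M and every f holomorphic on G₁ for which there exists c : ℕ → ℂ with (c_l · z^{l·k})_{l ≥ 1} absolutely summable with sum f(z) for all z ∈ G₁, one has A f = A_k f on G₂. -/

import Mathlib

open scoped Pointwise

/-!
Split the monomial expansion of `f` into its components `f_k` along the pairwise disjoint sets of
exponents `{k, 2k, 3k, …}`, `k ∈ M`, and put `A f = ∑ A_k f_k`. The Cauchy estimates on the torus
of polyradius `r ρ(k)` bound the coefficients of `f_k`, whence
`|f_k| ≤ ‖f‖_{r • closure G₁} ∑ r^|m|` on `r² • closure P(ρ(k))`, the sum being over the exponents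
`m` of `f_k`. As the sets of exponents are disjoint, these bounds have a finite sum over `k`, so
`∑ A_k f_k` converges locally uniformly with a bound linear in `‖f‖_{r • closure G₁}`. If all
exponents of `f` lie in one of the sets, the remaining components vanish on `G₁` and `A_k`
annihilates them, since by its bound `A_k` depends only on the values in `P(ρ(k))`.
-/

open Filter Function Set Topology

section SupNorm

variable {X F : Type*} [NormedAddCommGroup F] {f : X → F} {S : Set X} {C : ℝ} {x : X}

/-- The supremum `‖f‖_S` of `‖f‖` over `S`. It is meaningful when `f` is bounded on `S`; an
unbounded family of reals has supremum `0`. -/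
noncomputable def supNormOn (f : X → F) (S : Set X) : ℝ :=
  ⨆ x ∈ S, ‖f x‖

lemma supNormOn_nonneg (f : X → F) (S : Set X) : 0 ≤ supNormOn f S :=
  Real.iSup_nonneg fun _ ↦ Real.iSup_nonneg fun _ ↦ norm_nonneg _

lemma supNormOn_le (hC : 0 ≤ C) (h : ∀ x ∈ S, ‖f x‖ ≤ C) : supNormOn f S ≤ C :=
  Real.iSup_le (fun x ↦ Real.iSup_le (h x) hC) hC

lemma norm_le_supNormOn (hf : BddAbove ((fun x ↦ ‖f x‖) '' S)) (hx : x ∈ S) :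
    ‖f x‖ ≤ supNormOn f S := by
  obtain ⟨C, hC⟩ := hf
  have hbdd : BddAbove (range fun x ↦ ⨆ _ : x ∈ S, ‖f x‖) := by
    refine ⟨max C 0, forall_mem_range.2 fun y ↦ ?_⟩
    exact Real.iSup_le (fun hy ↦ (hC (mem_image_of_mem _ hy)).trans (le_max_left _ _))
      (le_max_right _ _)
  exact (ciSup_pos (f := fun _ : x ∈ S ↦ ‖f x‖) hx).symm.trans_le (le_ciSup hbdd x)

lemma norm_le_supNormOn_smul_closure {E : Type*} [NormedAddCommGroup E] [NormedSpace ℝ E]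
    [ProperSpace E] {U : Set E} {f : E → F} {r : ℝ} {x : E} (hU : Bornology.IsBounded U)
    (hr : r • closure U ⊆ U) (hf : ContinuousOn f U) (hx : x ∈ r • closure U) :
    ‖f x‖ ≤ supNormOn f (r • closure U) :=
  norm_le_supNormOn ((hU.isCompact_closure.smul r).bddAbove_image (hf.mono hr).norm) hx

lemma supNormOn_le_of_hasSum {κ : Type*} {f : κ → X → F} {g : X → F} {u : κ → ℝ} {N : ℝ}
    (hu : Summable u) (hN : 0 ≤ N) (hu0 : ∀ k, 0 ≤ u k) (hfu : ∀ k, ∀ x ∈ S, ‖f k x‖ ≤ u k * N)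
    (hg : ∀ x ∈ S, HasSum (fun k ↦ f k x) (g x)) : supNormOn g S ≤ (∑' k, u k) * N := by
  refine supNormOn_le (mul_nonneg (tsum_nonneg hu0) hN) fun x hx ↦ ?_
  rw [← (hg x hx).tsum_eq]
  exact tsum_of_norm_bounded (hu.hasSum.mul_right N) (hfu · x hx)

end SupNorm

section HolomorphicSeries

lemma exists_mem_smul_of_isOpen {E : Type*} [AddCommGroup E] [Module ℝ E] [TopologicalSpace E]
    [ContinuousSMul ℝ E] {U : Set E} {z : E} (hU : IsOpen U) (hz : z ∈ U) :
    ∃ t ∈ Ioo (0 : ℝ) 1, z ∈ t • U := by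
  have hcont : ContinuousAt (fun t : ℝ ↦ t⁻¹ • z) 1 :=
    (continuousAt_inv₀ one_ne_zero).smul continuousAt_const
  have hmem : ∀ᶠ t : ℝ in 𝓝[<] 1, t⁻¹ • z ∈ U :=
    (hcont.eventually (hU.mem_nhds (by simpa using hz))).filter_mono nhdsWithin_le_nhds
  obtain ⟨t, htU, ht⟩ := (hmem.and (Ioo_mem_nhdsLT one_pos)).exists
  exact ⟨t, ht, (mem_smul_set_iff_inv_smul_mem₀ ht.1.ne' _ _).2 htU⟩

variable {κ E F : Type*} [NormedAddCommGroup E] [NormedSpace ℂ E]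
  [NormedAddCommGroup F] [NormedSpace ℂ F] [CompleteSpace F]
  {f : κ → E → F} {g : E → F} {U : Set E}

lemma differentiableAt_of_hasSum_of_norm_le {V : Set E} {z : E} {u : κ → ℝ} (hV : V ∈ 𝓝 z)
    (hf : ∀ k, DifferentiableOn ℂ (f k) V) (hu : Summable u) (hfu : ∀ k, ∀ w ∈ V, ‖f k w‖ ≤ u k)
    (hg : ∀ w ∈ V, HasSum (fun k ↦ f k w) (g w)) : DifferentiableAt ℂ g z := by
  obtain ⟨δ, hδ, hball⟩ := Metric.mem_nhds_iff.1 hV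
  have hδ' : 0 < δ / 2 := half_pos hδ
  have hsub : ∀ x ∈ Metric.ball z (δ / 2), Metric.ball x (δ / 2) ⊆ V := fun x hx ↦
    (Metric.ball_subset_ball' (by rw [Metric.mem_ball] at hx; linarith)).trans hball
  have hderiv : ∀ k, ∀ x ∈ Metric.ball z (δ / 2), HasFDerivAt (f k) (fderiv ℂ (f k) x) x :=
    fun k x hx ↦ ((hf k).differentiableAt
      (mem_of_superset (Metric.ball_mem_nhds x hδ') (hsub x hx))).hasFDerivAt
  have hcauchy : ∀ k, ∀ x ∈ Metric.ball z (δ / 2), ‖fderiv ℂ (f k) x‖ ≤ 2 * u k / (δ / 2) := by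
    intro k x hx
    refine Complex.norm_fderiv_le_div_of_mapsTo_ball ((hf k).mono (hsub x hx)) (fun y hy ↦ ?_) hδ'
    have hx' := hfu k x (hsub x hx (Metric.mem_ball_self hδ'))
    rw [Metric.mem_closedBall, dist_eq_norm]
    linarith [norm_sub_le (f k y) (f k x), hfu k y (hsub x hx hy)]
  have hz := Metric.mem_ball_self (x := z) hδ'
  have htsum := (hasFDerivAt_tsum_of_isPreconnected ((hu.mul_left 2).div_const _)
    Metric.isOpen_ball (convex_ball z _).isPreconnected hderiv hcauchy hz
    (hg z (mem_of_mem_nhds hV)).summable hz).differentiableAt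
  exact htsum.congr_of_eventuallyEq (mem_of_superset hV fun w hw ↦ (hg w hw).tsum_eq.symm)

lemma differentiableOn_of_hasSum_of_norm_le_smul (hU : IsOpen U)
    (hsmul : ∀ t ∈ Ioo (0 : ℝ) 1, t • U ⊆ U) (hf : ∀ k, DifferentiableOn ℂ (f k) U)
    (hfu : ∀ t ∈ Ioo (0 : ℝ) 1, ∃ u : κ → ℝ, Summable u ∧ ∀ k, ∀ z ∈ t • U, ‖f k z‖ ≤ u k)
    (hg : ∀ z ∈ U, HasSum (fun k ↦ f k z) (g z)) : DifferentiableOn ℂ g U := by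
  intro z hz
  obtain ⟨t, ht, hzt⟩ := exists_mem_smul_of_isOpen hU hz
  obtain ⟨u, hu, hle⟩ := hfu t ht
  exact (differentiableAt_of_hasSum_of_norm_le ((hU.smul₀ ht.1.ne').mem_nhds hzt)
    (fun k ↦ (hf k).mono (hsmul t ht)) hu hle
    fun w hw ↦ hg w (hsmul t ht hw)).differentiableWithinAt

end HolomorphicSeries

section LinearAlgebra

lemma exists_linearMap_hasSum {κ R V X F : Type*} [Semiring R] [AddCommMonoid V] [Module R V]
    [AddCommMonoid F] [Module R F] [TopologicalSpace F] [ContinuousAdd F] [ContinuousConstSMul R F]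
    [T2Space F] (T : κ → V →ₗ[R] X → F) (S : Set X)
    (hT : ∀ v, ∀ x ∈ S, Summable fun k ↦ T k v x) :
    ∃ B : V →ₗ[R] X → F, ∀ v, ∀ x ∈ S, HasSum (fun k ↦ T k v x) (B v x) := by
  classical
  let B (x : S) : V →ₗ[R] F :=
    { toFun v := ∑' k, T k v x
      map_add' v w := by
        simpa only [map_add, Pi.add_apply] using (hT v x x.2).tsum_add (hT w x x.2)
      map_smul' a v := by
        simpa only [map_smul, Pi.smul_apply, RingHom.id_apply]
          using (hT v x x.2).tsum_const_smul a }
  refine ⟨LinearMap.pi fun x ↦ if hx : x ∈ S then B ⟨x, hx⟩ else 0, fun v x hx ↦ ?_⟩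
  simpa only [LinearMap.pi_apply, dif_pos hx] using! (hT v x hx).hasSum

/-- The `ℂ`-vector space of functions holomorphic on `U`, as a subspace of the space of all
functions: membership does not restrict the values outside `U`. -/
def holomorphicOn {E : Type*} (F : Type*) [NormedAddCommGroup E] [NormedSpace ℂ E]
    [NormedAddCommGroup F] [NormedSpace ℂ F] (U : Set E) : Submodule ℂ (E → F) where
  carrier := {f | DifferentiableOn ℂ f U}
  add_mem' hf hg := hf.add hg
  zero_mem' := differentiableOn_const 0
  smul_mem' a _ hf := hf.const_smul a

end LinearAlgebra

section MultiIndices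

lemma summable_prod_apply_of_nonneg {ι : Type*} [Fintype ι] {β : ι → Type*} {g : ∀ j, β j → ℝ}
    (hg0 : ∀ j b, 0 ≤ g j b) (hg : ∀ j, Summable (g j)) :
    Summable fun m : ∀ j, β j ↦ ∏ j, g j (m j) := by
  classical
  refine summable_of_sum_le (c := ∏ j, ∑' b, g j b) (fun m ↦ Finset.prod_nonneg fun j _ ↦ hg0 j _)
    fun s ↦ ?_
  have hs : s ⊆ Fintype.piFinset fun j ↦ s.image (· j) := fun m hm ↦
    Fintype.mem_piFinset.2 fun j ↦ Finset.mem_image_of_mem (· j) hm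
  calc ∑ m ∈ s, ∏ j, g j (m j)
    _ ≤ ∑ m ∈ Fintype.piFinset fun j ↦ s.image (· j), ∏ j, g j (m j) :=
      Finset.sum_le_sum_of_subset_of_nonneg hs fun m _ _ ↦ Finset.prod_nonneg fun j _ ↦ hg0 j _
    _ = ∏ j, ∑ b ∈ s.image (· j), g j b := (Finset.prod_univ_sum _ _).symm
    _ ≤ ∏ j, ∑' b, g j b := Finset.prod_le_prod (fun j _ ↦ Finset.sum_nonneg fun b _ ↦ hg0 j b)
      fun j _ ↦ (hg j).sum_le_tsum _ fun b _ ↦ hg0 j b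

lemma summable_pow_sum {ι : Type*} [Fintype ι] {r : ℝ} (hr0 : 0 ≤ r) (hr1 : r < 1) :
    Summable fun m : ι → ℕ ↦ r ^ ∑ j, m j := by
  simpa only [Finset.prod_pow_eq_pow_sum] using summable_prod_apply_of_nonneg (β := fun _ : ι ↦ ℕ)
    (fun _ l ↦ pow_nonneg hr0 l) fun _ ↦ summable_geometric_of_lt_one hr0 hr1

lemma summable_tsum_of_pairwise_disjoint {κ β : Type*} {g : β → ℝ} {S : κ → Set β}
    (hg : Summable g) (hS : Pairwise (Disjoint on S)) : Summable fun k ↦ ∑' b : S k, g b :=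
  (hg.comp_injective
    (Subtype.val_injective.comp (sigmaToiUnion_injective S hS))).sigma

variable {ι : Type*}

/-- The multi-indices `k, 2k, 3k, …`, i.e. the exponents occurring in the functions of `H_k`. -/
def ray (k : ι → ℕ) : Set (ι → ℕ) :=
  range fun l : ℕ ↦ (l + 1) • k

lemma succ_smul_injective {k : ι → ℕ} (hk : k ≠ 0) : Injective fun l : ℕ ↦ (l + 1) • k := by
  obtain ⟨j, hj⟩ := Function.ne_iff.1 hk
  intro a b h
  exact Nat.succ_injective (Nat.eq_of_mul_eq_mul_right (Nat.pos_of_ne_zero hj) (congrFun h j))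

lemma eq_of_succ_smul_eq_succ_smul [Fintype ι] {k k' : ι → ℕ} (hk : Finset.univ.gcd k = 1)
    (hk' : Finset.univ.gcd k' = 1) {l l' : ℕ} (h : (l + 1) • k = (l' + 1) • k') : k = k' := by
  have hgcd (a : ℕ) (m : ι → ℕ) : Finset.univ.gcd (a • m) = a * Finset.univ.gcd m :=
    (Finset.gcd_mul_left ..).trans (by rw [normalize_eq])
  have hl : l + 1 = l' + 1 := by
    simpa only [hgcd, hk, hk', mul_one] using congrArg Finset.univ.gcd h
  rw [hl] at h
  exact funext fun j ↦ Nat.eq_of_mul_eq_mul_left l'.succ_pos (congrFun h j)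

lemma pairwise_disjoint_ray [Fintype ι] :
    Pairwise (Disjoint on fun k : {k : ι → ℕ // k ≠ 0 ∧ Finset.univ.gcd k = 1} ↦ ray k.1) := by
  refine fun k k' hne ↦ disjoint_left.2 ?_
  rintro _ ⟨l, rfl⟩ ⟨l', h⟩
  exact hne (Subtype.ext (eq_of_succ_smul_eq_succ_smul k.2.2 k'.2.2 h.symm))

end MultiIndices

section FourierCoefficients

open UnitAddTorus MeasureTheory

variable {d κ : Type*} [Fintype d]

noncomputable local instance : MeasureSpace UnitAddCircle := ⟨AddCircle.haarAddCircle⟩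

local instance : IsProbabilityMeasure (volume : Measure UnitAddCircle) :=
  inferInstanceAs (IsProbabilityMeasure AddCircle.haarAddCircle)

lemma mFourierCoeff_eq_of_hasSum {f : C(UnitAddTorus d, ℂ)} {e : κ → d → ℤ} (he : Injective e)
    {a : κ → ℂ} (hf : HasSum (fun p ↦ a p • mFourier (e p)) f) (p : κ) :
    mFourierCoeff f (e p) = a p := by
  classical
  let Φ := (innerSL ℂ (mFourierLp 2 (e p))).comp (ContinuousMap.toLp (E := ℂ) 2 volume ℂ)
  have hΦ : Φ f = mFourierCoeff f (e p) := by
    rw [← mFourierCoeff_toLp, ← mFourierBasis_repr, HilbertBasis.repr_apply_apply,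
      coe_mFourierBasis]
    rfl
  have hterm (q : κ) : Φ (a q • mFourier (e q)) = if q = p then a p else 0 := by
    have horth := orthonormal_iff_ite.1 (orthonormal_mFourier (d := d)) (e p) (e q)
    rw [map_smul, smul_eq_mul, show Φ (mFourier (e q)) = _ from horth]
    by_cases h : q = p
    · simp [h]
    · simp [h, he.eq_iff, Ne.symm h]
  rw [← hΦ]
  exact (hf.mapL Φ).unique ((hasSum_ite_eq p (a p)).congr_fun hterm)

lemma norm_mFourierCoeff_le (f : C(UnitAddTorus d, ℂ)) (m : d → ℤ) :
    ‖mFourierCoeff f m‖ ≤ ‖f‖ := by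
  refine (norm_integral_le_of_norm_le_const (C := ‖f‖) (ae_of_all _ fun θ ↦ ?_)).trans_eq (by simp)
  rw [norm_smul]
  calc ‖mFourier (-m) θ‖ * ‖f θ‖
    _ ≤ ‖mFourier (-m)‖ * ‖f‖ := by gcongr <;> exact ContinuousMap.norm_coe_le_norm _ θ
    _ = ‖f‖ := by rw [mFourier_norm, one_mul]

end FourierCoefficients

section ReinhardtDomains

variable {ι : Type*}

/-- The polydisc `P(ρ)` centred at the origin. -/
def polydisc (ρ : ι → ℝ) : Set (ι → ℂ) :=
  {z | ∀ j, ‖z j‖ < ρ j}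

/-- The distinguished boundary of the polydisc `P(ρ)`. -/
def torus (ρ : ι → ℝ) : Set (ι → ℂ) :=
  {z | ∀ j, ‖z j‖ = ρ j}

/-- The circling condition in the definition of a complete `n`-circled (complete Reinhardt)
domain; openness, connectedness and boundedness are not included. -/
def IsCompleteReinhardt (G : Set (ι → ℂ)) : Prop :=
  ∀ z ∈ G, ∀ w : ι → ℂ, (∀ j, ‖w j‖ ≤ ‖z j‖) → w ∈ G

variable {G : Set (ι → ℂ)} {ρ : ι → ℝ} {r : ℝ} {z : ι → ℂ}

lemma isOpen_polydisc [Finite ι] : IsOpen (polydisc ρ) := by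
  simp only [polydisc, ofPred_forall]
  exact isOpen_iInter_of_finite fun j ↦ isOpen_lt (by fun_prop) continuous_const

lemma closure_polydisc (hρ : ∀ j, 0 < ρ j) : closure (polydisc ρ) = {z | ∀ j, ‖z j‖ ≤ ρ j} := by
  have hpi : polydisc ρ = univ.pi fun j ↦ Metric.ball 0 (ρ j) := by ext; simp [polydisc]
  ext z
  simp [hpi, closure_pi_set, closure_ball _ (hρ _).ne']

lemma isCompleteReinhardt_polydisc : IsCompleteReinhardt (polydisc ρ) :=
  fun _ hz _ hw j ↦ (hw j).trans_lt (hz j)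

lemma torus_smul_subset_smul_closure (hρ : ∀ j, 0 < ρ j) (hρG : polydisc ρ ⊆ G) (hr : 0 < r) :
    torus (r • ρ) ⊆ r • closure G := by
  intro z hz
  rw [mem_smul_set_iff_inv_smul_mem₀ hr.ne']
  refine closure_mono hρG ((closure_polydisc hρ).ge fun j ↦ le_of_eq ?_)
  simp [hz j, abs_of_pos hr, hr.ne']

namespace IsCompleteReinhardt

lemma smul_closure_subset [Finite ι] (hG : IsCompleteReinhardt G) (hr : r ∈ Ioo (0 : ℝ) 1) :
    r • closure G ⊆ G := by
  rintro _ ⟨z, hz, rfl⟩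
  have hnear : ∀ᶠ w in 𝓝 z, ∀ j, ‖(r • z) j‖ ≤ ‖w j‖ := by
    refine eventually_all.2 fun j ↦ ?_
    rcases eq_or_ne (z j) 0 with hj | hj
    · simp [hj]
    · have hlt : ‖(r • z) j‖ < ‖z j‖ := by
        rw [Pi.smul_apply, norm_smul, Real.norm_of_nonneg hr.1.le]
        exact mul_lt_of_lt_one_left (norm_pos_iff.2 hj) hr.2
      have hcont : Continuous fun w : ι → ℂ ↦ ‖w j‖ := by fun_prop
      exact (hcont.continuousAt.eventually_const_lt hlt).mono fun _ ↦ le_of_lt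
  obtain ⟨w, hwG, hw⟩ := ((mem_closure_iff_frequently.1 hz).and_eventually hnear).exists
  exact hG w hwG _ hw

lemma exists_forall_norm_lt (hG : IsCompleteReinhardt G) (hGo : IsOpen G) (hz : z ∈ G) :
    ∃ w ∈ G, ∀ j, ‖z j‖ < ‖w j‖ := by
  have habs : (fun j ↦ ((‖z j‖ + 0 : ℝ) : ℂ)) ∈ G := hG z hz _ (by simp)
  have hcont : Continuous fun (ε : ℝ) j ↦ ((‖z j‖ + ε : ℝ) : ℂ) := by fun_prop
  obtain ⟨ε, hεG, hε⟩ := (((hcont.continuousAt.eventually (hGo.mem_nhds habs)).filter_mono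
    nhdsWithin_le_nhds).and (self_mem_nhdsWithin (s := Ioi (0 : ℝ)))).exists
  refine ⟨_, hεG, fun j ↦ ?_⟩
  rw [Complex.norm_real, Real.norm_of_nonneg (add_nonneg (norm_nonneg _) (le_of_lt hε))]
  exact lt_add_of_pos_right _ hε

lemma exists_torus_subset (hG : IsCompleteReinhardt G) (hGo : IsOpen G) (hne : G.Nonempty) :
    ∃ ρ : ι → ℝ, (∀ j, 0 < ρ j) ∧ torus ρ ⊆ G := by
  obtain ⟨z, hz⟩ := hne
  obtain ⟨w, hwG, hw⟩ := hG.exists_forall_norm_lt hGo hz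
  exact ⟨fun j ↦ ‖w j‖, fun j ↦ (norm_nonneg _).trans_lt (hw j),
    fun v hv ↦ hG w hwG v fun j ↦ (hv j).le⟩

end IsCompleteReinhardt

end ReinhardtDomains

section MonomialExpansion

variable {ι : Type*} [Fintype ι]

/-- `f` is the sum on `G` of the monomial series with coefficients `c`. Unconditional summability of
complex numbers is absolute summability, so no separate convergence condition is needed. -/
def HasMonomialExpansionOn (f : (ι → ℂ) → ℂ) (c : (ι → ℕ) → ℂ) (G : Set (ι → ℂ)) : Prop :=
  ∀ z ∈ G, HasSum (fun m ↦ c m * ∏ j, z j ^ m j) (f z)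

variable {f g : (ι → ℂ) → ℂ} {c c' : (ι → ℕ) → ℂ} {G : Set (ι → ℂ)} {ρ : ι → ℝ} {r : ℝ}
  {z : ι → ℂ}

namespace HasMonomialExpansionOn

lemma mono {G' : Set (ι → ℂ)} (hf : HasMonomialExpansionOn f c G) (h : G' ⊆ G) :
    HasMonomialExpansionOn f c G' :=
  fun z hz ↦ hf z (h hz)

open UnitAddTorus in
/-- Restricting to the torus of polyradius `ρ` turns the coefficients `c m ρ^m` into Fourier
coefficients. -/
lemma norm_coeff_mul_prod_le (hρ : ∀ j, 0 ≤ ρ j) (hf : HasMonomialExpansionOn f c (torus ρ)) {N : ℝ}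
    (hN : ∀ z ∈ torus ρ, ‖f z‖ ≤ N) (m : ι → ℕ) : ‖c m‖ * ∏ j, ρ j ^ m j ≤ N := by
  have hρtorus : (fun j ↦ (ρ j : ℂ)) ∈ torus ρ := fun j ↦ by simp [abs_of_nonneg (hρ j)]
  let a : (ι → ℕ) → ℂ := fun m ↦ c m * ∏ j, (ρ j : ℂ) ^ m j
  let e : (ι → ℕ) → ι → ℤ := fun m j ↦ m j
  have he : Injective e := fun p q h ↦ funext fun j ↦ Nat.cast_injective (congrFun h j)
  have hsum : Summable fun m ↦ a m • mFourier (e m) := by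
    refine .of_norm ?_
    simpa only [norm_smul, mFourier_norm, mul_one] using (hf _ hρtorus).summable.norm
  let F : C(UnitAddTorus ι, ℂ) := ∑' m, a m • mFourier (e m)
  have hnorm : ‖F‖ ≤ N := by
    refine (ContinuousMap.norm_le _ ((norm_nonneg _).trans (hN _ hρtorus))).2 fun θ ↦ ?_
    have hθ : (fun j ↦ (ρ j : ℂ) * fourier 1 (θ j)) ∈ torus ρ := fun j ↦ by
      rw [norm_mul, fourier_apply, Circle.norm_coe, mul_one, Complex.norm_real,
        Real.norm_of_nonneg (hρ j)]
    have hvalue : F θ = f fun j ↦ (ρ j : ℂ) * fourier 1 (θ j) := by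
      rw [← ContinuousMap.tsum_apply hsum, ← (hf _ hθ).tsum_eq]
      refine tsum_congr fun m ↦ ?_
      simp [a, e, mFourier, fourier_apply, AddCircle.toCircle_nsmul, mul_pow,
        Finset.prod_mul_distrib, mul_assoc]
    exact hvalue ▸ hN _ hθ
  calc ‖c m‖ * ∏ j, ρ j ^ m j
    _ = ‖a m‖ := by simp [a, abs_of_nonneg, hρ]
    _ = ‖mFourierCoeff F (e m)‖ := by rw [mFourierCoeff_eq_of_hasSum he hsum.hasSum]
    _ ≤ N := (norm_mFourierCoeff_le _ _).trans hnorm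

lemma coeff_unique (hρ : ∀ j, 0 < ρ j) (hf : HasMonomialExpansionOn f c (torus ρ))
    (hf' : HasMonomialExpansionOn f c' (torus ρ)) : c = c' := by
  have hzero : HasMonomialExpansionOn 0 (c - c') (torus ρ) := fun z hz ↦ by
    simpa [sub_mul] using (hf z hz).sub (hf' z hz)
  funext m
  have hle := hzero.norm_coeff_mul_prod_le (fun j ↦ (hρ j).le) (N := 0) (by simp) m
  have hpos : 0 < ∏ j, ρ j ^ m j := Finset.prod_pos fun j _ ↦ pow_pos (hρ j) _
  exact sub_eq_zero.1 (norm_le_zero_iff.1 (nonpos_of_mul_nonpos_left hle hpos))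

lemma differentiableOn (hf : HasMonomialExpansionOn f c G) (hG : IsCompleteReinhardt G)
    (hGo : IsOpen G) : DifferentiableOn ℂ f G := by
  intro z hz
  obtain ⟨w, hwG, hw⟩ := hG.exists_forall_norm_lt hGo hz
  have hsub : polydisc (fun j ↦ ‖w j‖) ⊆ G := fun v hv ↦ hG w hwG v fun j ↦ (hv j).le
  refine (differentiableAt_of_hasSum_of_norm_le (isOpen_polydisc.mem_nhds hw) (fun m ↦ ?_)
    (hf w hwG).summable.norm (fun m v hv ↦ ?_) fun v hv ↦ hf v (hsub hv)).differentiableWithinAt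
  · exact (Differentiable.const_mul (by fun_prop) _).differentiableOn
  · simp only [norm_mul, norm_prod, norm_pow]
    gcongr with j
    exact (hv j).le

lemma norm_le_of_coeff_le {S : Set (ι → ℕ)} {N : ℝ} (hr0 : 0 ≤ r) (hr1 : r < 1)
    (hc : ∀ m, ‖c m‖ * ∏ j, ρ j ^ m j ≤ N) (hg : HasMonomialExpansionOn g (S.indicator c) {z})
    (hz : ∀ j, ‖z j‖ ≤ r * ρ j) : ‖g z‖ ≤ N * ∑' m : S, r ^ ∑ j, (m : ι → ℕ) j := by
  have hgz : HasSum (fun m : S ↦ c m * ∏ j, z j ^ (m : ι → ℕ) j) (g z) := by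
    refine (hasSum_subtype_iff_indicator (f := fun m ↦ c m * ∏ j, z j ^ m j)).2 ?_
    exact (hg z rfl).congr_fun fun m ↦ indicator_mul_left ..
  have hgeom : Summable fun m : S ↦ r ^ ∑ j, (m : ι → ℕ) j := (summable_pow_sum hr0 hr1).subtype S
  rw [← hgz.tsum_eq]
  refine tsum_of_norm_bounded (hgeom.hasSum.mul_left N) fun m ↦ ?_
  calc ‖c m * ∏ j, z j ^ (m : ι → ℕ) j‖
    _ = ‖c m‖ * ∏ j, ‖z j‖ ^ (m : ι → ℕ) j := by simp only [norm_mul, norm_prod, norm_pow]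
    _ ≤ ‖c m‖ * ∏ j, (r * ρ j) ^ (m : ι → ℕ) j := by gcongr with j; exact hz j
    _ = (‖c m‖ * ∏ j, ρ j ^ (m : ι → ℕ) j) * r ^ ∑ j, (m : ι → ℕ) j := by
      simp only [mul_pow, Finset.prod_mul_distrib, Finset.prod_pow_eq_pow_sum]
      ring
    _ ≤ N * r ^ ∑ j, (m : ι → ℕ) j := by gcongr; exact hc m

lemma norm_component_le (hf : HasMonomialExpansionOn f c G) (hG : IsCompleteReinhardt G)
    (hGo : IsOpen G) (hGb : Bornology.IsBounded G) (hρ : ∀ j, 0 < ρ j) (hρG : polydisc ρ ⊆ G)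
    (hr : r ∈ Ioo (0 : ℝ) 1) {S : Set (ι → ℕ)} (hg : HasMonomialExpansionOn g (S.indicator c) G)
    (hz : z ∈ (r ^ 2) • closure (polydisc ρ)) :
    ‖g z‖ ≤ supNormOn f (r • closure G) * ∑' m : S, r ^ ∑ j, (m : ι → ℕ) j := by
  have htorus := torus_smul_subset_smul_closure hρ hρG hr.1
  have hcoeff := norm_coeff_mul_prod_le (fun j ↦ mul_nonneg hr.1.le (hρ j).le)
    (hf.mono (htorus.trans (hG.smul_closure_subset hr))) fun w hw ↦
      norm_le_supNormOn_smul_closure hGb (hG.smul_closure_subset hr)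
        (hf.differentiableOn hG hGo).continuousOn (htorus hw)
  have hzG : z ∈ G := hρG (isCompleteReinhardt_polydisc.smul_closure_subset
    ⟨pow_pos hr.1 2, pow_lt_one₀ hr.1.le hr.2 two_ne_zero⟩ hz)
  refine norm_le_of_coeff_le hr.1.le hr.2 hcoeff
    (hg.mono (singleton_subset_iff.2 hzG)) fun j ↦ ?_
  rw [closure_polydisc hρ] at hz
  obtain ⟨w, hw, rfl⟩ := hz
  calc ‖(r ^ 2 • w) j‖
    _ = r * (r * ‖w j‖) := by simp [pow_two, mul_assoc, abs_of_pos hr.1]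
    _ ≤ r * (r • ρ) j := by
      have := hr.1.le
      rw [Pi.smul_apply, smul_eq_mul]
      gcongr
      exact hw j

lemma exists_linearMap_coeff (hρ : ∀ j, 0 < ρ j) (hρG : torus ρ ⊆ G)
    {p : Submodule ℂ ((ι → ℂ) → ℂ)} (hp : ∀ f ∈ p, ∃ c, HasMonomialExpansionOn f c G) :
    ∃ coeff : p →ₗ[ℂ] (ι → ℕ) → ℂ, ∀ f : p, HasMonomialExpansionOn f (coeff f) G := by
  choose coeff hcoeff using fun f : p ↦ hp f f.2
  have huniq {f : p} {c : (ι → ℕ) → ℂ} (hc : HasMonomialExpansionOn f c G) : coeff f = c :=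
    coeff_unique hρ ((hcoeff f).mono hρG) (hc.mono hρG)
  refine ⟨{ toFun := coeff, map_add' := fun f g ↦ huniq fun z hz ↦ ?_,
            map_smul' := fun a f ↦ huniq fun z hz ↦ ?_ }, hcoeff⟩
  · simpa [add_mul] using (hcoeff f z hz).add (hcoeff g z hz)
  · simpa [mul_assoc] using (hcoeff f z hz).mul_left a

lemma exists_linearMap_component {V : Type*} [AddCommGroup V] [Module ℂ V]
    {T : V →ₗ[ℂ] (ι → ℂ) → ℂ} {coeff : V →ₗ[ℂ] (ι → ℕ) → ℂ}
    (hcoeff : ∀ v, HasMonomialExpansionOn (T v) (coeff v) G) (S : Set (ι → ℕ)) :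
    ∃ Q : V →ₗ[ℂ] (ι → ℂ) → ℂ, ∀ v, HasMonomialExpansionOn (Q v) (S.indicator (coeff v)) G := by
  classical
  let term (m : ι → ℕ) : V →ₗ[ℂ] (ι → ℂ) → ℂ :=
    if m ∈ S then (LinearMap.proj m ∘ₗ coeff).smulRight fun z ↦ ∏ j, z j ^ m j else 0
  have hterm (m : ι → ℕ) (v : V) (z : ι → ℂ) :
      term m v z = S.indicator (coeff v) m * ∏ j, z j ^ m j := by
    by_cases hm : m ∈ S <;> simp [term, hm]
  obtain ⟨Q, hQ⟩ := exists_linearMap_hasSum term G fun v z hz ↦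
    ((hcoeff v z hz).summable.indicator S).congr fun m ↦
      (indicator_mul_left ..).trans (hterm m v z).symm
  exact ⟨Q, fun v z hz ↦ by simpa only [hterm] using hQ v z hz⟩

end HasMonomialExpansionOn

lemma exists_hasMonomialExpansionOn_ray {k : ι → ℕ} (hk : k ≠ 0) {b : ℕ → ℂ}
    (hf : ∀ z ∈ G, HasSum (fun l ↦ b l * ∏ j, z j ^ ((l + 1) • k) j) (f z)) :
    ∃ c, HasMonomialExpansionOn f c G ∧ support c ⊆ ray k := by
  have hinj := succ_smul_injective hk
  refine ⟨extend (fun l : ℕ ↦ (l + 1) • k) b 0, fun z hz ↦ ?_, fun m hm ↦ ?_⟩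
  · rw [← hinj.hasSum_iff]
    · simpa only [comp_def, hinj.extend_apply] using hf z hz
    · rintro m hm
      rw [extend_apply' _ _ _ hm, Pi.zero_apply, zero_mul]
  · by_contra h
    exact hm (extend_apply' _ _ _ h)

end MonomialExpansion

section Gluing

lemma eqOn_of_eqOn_of_supNormOn_le {X E F : Type*} [NormedAddCommGroup E] [NormedSpace ℝ E]
    [ProperSpace E] [NormedAddCommGroup F] [NormedSpace ℂ F] {G₂ : Set E} {P : Set X}
    {p : Submodule ℂ (X → ℂ)} {A : (X → ℂ) →ₗ[ℂ] E → F} (hG₂ : IsOpen G₂)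
    (hG₂b : Bornology.IsBounded G₂) (hG₂s : ∀ t ∈ Ioo (0 : ℝ) 1, t • closure G₂ ⊆ G₂)
    (hA : ∀ f ∈ p, ContinuousOn (A f) G₂)
    (hAb : ∀ t ∈ Ioo (0 : ℝ) 1, ∃ C, ∃ K ⊆ P, ∀ f ∈ p,
      supNormOn (A f) (t • closure G₂) ≤ C * supNormOn f K)
    {f g : X → ℂ} (hf : f ∈ p) (hg : g ∈ p) (hfg : EqOn f g P) : EqOn (A f) (A g) G₂ := by
  intro z hz
  obtain ⟨t, ht, hzt⟩ := exists_mem_smul_of_isOpen hG₂ hz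
  obtain ⟨C, K, hK, hC⟩ := hAb t ht
  have hsub : f - g ∈ p := p.sub_mem hf hg
  have hzero : supNormOn (f - g) K = 0 :=
    (supNormOn_le le_rfl fun x hx ↦ by simp [hfg (hK hx)]).antisymm (supNormOn_nonneg _ _)
  have hle := (norm_le_supNormOn_smul_closure hG₂b (hG₂s t ht) (hA _ hsub)
    (smul_set_mono subset_closure hzt)).trans (hC _ hsub)
  rw [hzero, mul_zero, norm_le_zero_iff, map_sub] at hle
  exact sub_eq_zero.1 hle

lemma exists_linearMap_hasSum_supNormOn_le {κ V E F : Type*} [AddCommGroup V] [Module ℂ V]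
    [NormedAddCommGroup E] [NormedSpace ℂ E] [NormedAddCommGroup F] [NormedSpace ℂ F]
    [CompleteSpace F] {p : Submodule ℂ V} {T : κ → p →ₗ[ℂ] E → F} {N : ℝ → p → ℝ} {U : Set E}
    (hU : IsOpen U) (hsmul : ∀ t ∈ Ioo (0 : ℝ) 1, t • closure U ⊆ U)
    (hT : ∀ k v, DifferentiableOn ℂ (T k v) U) (hN : ∀ r v, 0 ≤ N r v)
    (hTu : ∀ t ∈ Ioo (0 : ℝ) 1, ∃ u : κ → ℝ, Summable u ∧ (∀ k, 0 ≤ u k) ∧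
      ∃ r ∈ Ioo (0 : ℝ) 1, ∀ v k, ∀ z ∈ t • closure U, ‖T k v z‖ ≤ u k * N r v) :
    ∃ B : V →ₗ[ℂ] E → F,
      (∀ v : p, DifferentiableOn ℂ (B v) U ∧ ∀ z ∈ U, HasSum (fun k ↦ T k v z) (B v z)) ∧
      ∀ t ∈ Ioo (0 : ℝ) 1, ∃ C > 0, ∃ r ∈ Ioo (0 : ℝ) 1,
        ∀ v : p, supNormOn (B v) (t • closure U) ≤ C * N r v := by
  have hsub (t : ℝ) : t • U ⊆ t • closure U := smul_set_mono subset_closure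
  have hbound (v : p) : ∀ t ∈ Ioo (0 : ℝ) 1,
      ∃ u : κ → ℝ, Summable u ∧ ∀ k, ∀ z ∈ t • U, ‖T k v z‖ ≤ u k := fun t ht ↦ by
    obtain ⟨u, hu, -, r, -, hle⟩ := hTu t ht
    exact ⟨_, hu.mul_right (N r v), fun k z hz ↦ hle v k z (hsub t hz)⟩
  obtain ⟨B₀, hB₀⟩ := exists_linearMap_hasSum T U fun v z hz ↦ by
    obtain ⟨t, ht, hzt⟩ := exists_mem_smul_of_isOpen hU hz
    obtain ⟨u, hu, hle⟩ := hbound v t ht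
    exact .of_norm_bounded hu fun k ↦ hle k z hzt
  obtain ⟨B, rfl⟩ := LinearMap.exists_extend B₀
  refine ⟨B, fun v ↦ ⟨differentiableOn_of_hasSum_of_norm_le_smul hU
    (fun t ht ↦ (hsub t).trans (hsmul t ht)) (hT · v) (hbound v) (hB₀ v), hB₀ v⟩, fun t ht ↦ ?_⟩
  obtain ⟨u, hu, hu0, r, hr, hle⟩ := hTu t ht
  refine ⟨∑' k, u k + 1, add_pos_of_nonneg_of_pos (tsum_nonneg hu0) one_pos, r, hr, fun v ↦ ?_⟩
  calc supNormOn (B v) (t • closure U)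
    _ ≤ (∑' k, u k) * N r v :=
      supNormOn_le_of_hasSum hu (hN r v) hu0 (hle v) fun z hz ↦ hB₀ v z (hsmul t ht hz)
    _ ≤ (∑' k, u k + 1) * N r v :=
      mul_le_mul_of_nonneg_right (le_add_of_nonneg_right zero_le_one) (hN r v)

variable {ι κ E F : Type*} [Fintype ι] [NormedAddCommGroup F] [NormedSpace ℂ F]
  {G₁ : Set (ι → ℂ)} {S : κ → Set (ι → ℕ)}

lemma exists_linearMap_components (hG₁ : IsOpen G₁) (hG₁c : IsCompleteReinhardt G₁)
    (hG₁n : G₁.Nonempty) (hS : Pairwise (Disjoint on S)) {p : Submodule ℂ ((ι → ℂ) → ℂ)}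
    (hp : ∀ f ∈ p, ∃ c, HasMonomialExpansionOn f c G₁) :
    ∃ Q : κ → p →ₗ[ℂ] (ι → ℂ) → ℂ,
      (∀ f : p, ∃ c, HasMonomialExpansionOn f c G₁ ∧
        ∀ k, HasMonomialExpansionOn (Q k f) ((S k).indicator c) G₁) ∧
      ∀ k (f : p) c, HasMonomialExpansionOn f c G₁ → support c ⊆ S k →
        EqOn (Q k f) f G₁ ∧ ∀ k' ≠ k, EqOn (Q k' f) 0 G₁ := by
  obtain ⟨σ, hσ, hσG⟩ := hG₁c.exists_torus_subset hG₁ hG₁n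
  obtain ⟨coeff, hcoeff⟩ := HasMonomialExpansionOn.exists_linearMap_coeff hσ hσG hp
  choose Q hQ using fun k ↦
    HasMonomialExpansionOn.exists_linearMap_component (T := p.subtype) hcoeff (S k)
  refine ⟨Q, fun f ↦ ⟨coeff f, hcoeff f, fun k ↦ hQ k f⟩, fun k f c hf hc ↦ ?_⟩
  obtain rfl : coeff f = c :=
    HasMonomialExpansionOn.coeff_unique hσ ((hcoeff f).mono hσG) (hf.mono hσG)
  refine ⟨fun z hz ↦ ?_, fun k' hk' z hz ↦ ?_⟩
  · have hQz := hQ k f z hz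
    rw [indicator_eq_self.2 hc] at hQz
    exact hQz.unique (hf z hz)
  · have hQz := hQ k' f z hz
    rw [indicator_eq_zero'.2 ((hS hk'.symm).mono_left hc)] at hQz
    exact hQz.unique (by simp [hasSum_zero])

lemma exists_summable_norm_apply_component_le {V : Type*} {ρ : κ → ι → ℝ}
    {A : κ → ((ι → ℂ) → ℂ) →ₗ[ℂ] E → F} {T : V → (ι → ℂ) → ℂ} {Q : κ → V → (ι → ℂ) → ℂ}
    {C s : ℝ} {K : Set E} (hG₁ : IsOpen G₁) (hG₁b : Bornology.IsBounded G₁)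
    (hG₁c : IsCompleteReinhardt G₁) (hS : Pairwise (Disjoint on S)) (hρ : ∀ k j, 0 < ρ k j)
    (hρG : ∀ k, polydisc (ρ k) ⊆ G₁) (hC : 0 ≤ C) (hs : s ∈ Ioo (0 : ℝ) 1)
    (hA : ∀ k f, DifferentiableOn ℂ f (polydisc (ρ k)) → ∀ z ∈ K,
      ‖A k f z‖ ≤ C * supNormOn f (s • closure (polydisc (ρ k))))
    (hQ : ∀ v, ∃ c, HasMonomialExpansionOn (T v) c G₁ ∧
      ∀ k, HasMonomialExpansionOn (Q k v) ((S k).indicator c) G₁) :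
    ∃ u : κ → ℝ, Summable u ∧ (∀ k, 0 ≤ u k) ∧ ∃ r ∈ Ioo (0 : ℝ) 1, ∀ v k, ∀ z ∈ K,
      ‖A k (Q k v) z‖ ≤ u k * supNormOn (T v) (r • closure G₁) := by
  let r := √s
  have hr : r ∈ Ioo (0 : ℝ) 1 :=
    ⟨Real.sqrt_pos.2 hs.1, (Real.sqrt_lt_sqrt hs.1.le hs.2).trans_eq Real.sqrt_one⟩
  let σ (k : κ) : ℝ := ∑' m : S k, r ^ ∑ j, (m : ι → ℕ) j
  have hσ (k) : 0 ≤ σ k := tsum_nonneg fun m ↦ pow_nonneg hr.1.le _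
  refine ⟨fun k ↦ C * σ k,
    (summable_tsum_of_pairwise_disjoint (summable_pow_sum hr.1.le hr.2) hS).mul_left C,
    fun k ↦ mul_nonneg hC (hσ k), r, hr, fun v k z hz ↦ ?_⟩
  obtain ⟨c, hf, hq⟩ := hQ v
  have hle : supNormOn (Q k v) (s • closure (polydisc (ρ k))) ≤
      supNormOn (T v) (r • closure G₁) * σ k := by
    refine supNormOn_le (mul_nonneg (supNormOn_nonneg _ _) (hσ k)) fun x hx ↦ ?_
    rw [← Real.sq_sqrt hs.1.le] at hx
    exact hf.norm_component_le hG₁c hG₁ hG₁b (hρ k) (hρG k) hr (hq k) hx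
  calc ‖A k (Q k v) z‖
    _ ≤ C * supNormOn (Q k v) (s • closure (polydisc (ρ k))) :=
      hA k _ (((hq k).differentiableOn hG₁c hG₁).mono (hρG k)) z hz
    _ ≤ C * (supNormOn (T v) (r • closure G₁) * σ k) := by gcongr
    _ = C * σ k * supNormOn (T v) (r • closure G₁) := by ring

theorem stmt_16_general [NormedAddCommGroup E] [NormedSpace ℂ E] [ProperSpace E]
    [CompleteSpace F] {G₂ : Set E} {ρ : κ → ι → ℝ}
    {A : κ → ((ι → ℂ) → ℂ) →ₗ[ℂ] E → F}
    (hG₁ : IsOpen G₁) (hG₁b : Bornology.IsBounded G₁) (hG₁c : IsCompleteReinhardt G₁)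
    (hG₁n : G₁.Nonempty) (hG₂ : IsOpen G₂) (hG₂b : Bornology.IsBounded G₂)
    (hG₂s : ∀ t ∈ Ioo (0 : ℝ) 1, t • closure G₂ ⊆ G₂)
    (hS : Pairwise (Disjoint on S)) (hρ : ∀ k j, 0 < ρ k j) (hρG : ∀ k, polydisc (ρ k) ⊆ G₁)
    (hexp : ∀ f, DifferentiableOn ℂ f G₁ → ∃ c, HasMonomialExpansionOn f c G₁)
    (hA : ∀ k f, DifferentiableOn ℂ f (polydisc (ρ k)) → DifferentiableOn ℂ (A k f) G₂)
    (hAb : ∀ t ∈ Ioo (0 : ℝ) 1, ∃ C > 0, ∃ s ∈ Ioo (0 : ℝ) 1, ∀ k f,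
      DifferentiableOn ℂ f (polydisc (ρ k)) →
        supNormOn (A k f) (t • closure G₂) ≤ C * supNormOn f (s • closure (polydisc (ρ k)))) :
    ∃ B : ((ι → ℂ) → ℂ) →ₗ[ℂ] E → F,
      (∀ f, DifferentiableOn ℂ f G₁ → DifferentiableOn ℂ (B f) G₂) ∧
      (∀ t ∈ Ioo (0 : ℝ) 1, ∃ C' > 0, ∃ r ∈ Ioo (0 : ℝ) 1, ∀ f, DifferentiableOn ℂ f G₁ →
        supNormOn (B f) (t • closure G₂) ≤ C' * supNormOn f (r • closure G₁)) ∧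
      ∀ k f c, HasMonomialExpansionOn f c G₁ → support c ⊆ S k → EqOn (B f) (A k f) G₂ := by
  obtain ⟨Q, hQ, hQS⟩ :=
    exists_linearMap_components (p := holomorphicOn ℂ G₁) hG₁ hG₁c hG₁n hS hexp
  have hQhol (k) (f : holomorphicOn ℂ G₁) : DifferentiableOn ℂ (Q k f) (polydisc (ρ k)) := by
    obtain ⟨c, -, hc⟩ := hQ f
    exact ((hc k).differentiableOn hG₁c hG₁).mono (hρG k)
  have hcongr (k) {f g} (hf : DifferentiableOn ℂ f (polydisc (ρ k)))
      (hg : DifferentiableOn ℂ g (polydisc (ρ k))) (hfg : EqOn f g G₁) :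
      EqOn (A k f) (A k g) G₂ := by
    refine eqOn_of_eqOn_of_supNormOn_le (p := holomorphicOn ℂ (polydisc (ρ k))) hG₂ hG₂b hG₂s
      (fun f hf ↦ (hA k f hf).continuousOn) (fun t ht ↦ ?_) hf hg (hfg.mono (hρG k))
    obtain ⟨C, -, s, hs, hle⟩ := hAb t ht
    exact ⟨C, _, isCompleteReinhardt_polydisc.smul_closure_subset hs, hle k⟩
  obtain ⟨B, hB, hBb⟩ := exists_linearMap_hasSum_supNormOn_le (T := fun k ↦ A k ∘ₗ Q k)
    (N := fun r f ↦ supNormOn (f : (ι → ℂ) → ℂ) (r • closure G₁)) hG₂ hG₂s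
    (fun k f ↦ hA k _ (hQhol k f)) (fun r f ↦ supNormOn_nonneg _ _) fun t ht ↦ by
      obtain ⟨C, hC, s, hs, hle⟩ := hAb t ht
      exact exists_summable_norm_apply_component_le (A := A) (T := Subtype.val) hG₁ hG₁b hG₁c hS
        hρ hρG hC.le hs (fun k f hf z hz ↦ (norm_le_supNormOn_smul_closure hG₂b (hG₂s t ht)
          (hA k f hf).continuousOn hz).trans (hle k f hf)) hQ
  refine ⟨B, fun f hf ↦ (hB ⟨f, hf⟩).1, fun t ht ↦ ?_, fun k f c hc hcS z hz ↦ ?_⟩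
  · obtain ⟨C, hC, r, hr, hle⟩ := hBb t ht
    exact ⟨C, hC, r, hr, fun f hf ↦ hle ⟨f, hf⟩⟩
  · have hf := hc.differentiableOn hG₁c hG₁
    obtain ⟨hQk, hQk'⟩ := hQS k ⟨f, hf⟩ c hc hcS
    refine ((hB ⟨f, hf⟩).2 z hz).unique ?_
    rw [← hcongr k (hQhol k _) (hf.mono (hρG k)) hQk hz]
    refine hasSum_single k fun k' hk' ↦ ?_
    exact (hcongr k' (hQhol k' _) (differentiableOn_const 0) (hQk' k' hk') hz).trans
      (congrFun (map_zero (A k')) z)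

end Gluing

/-- Theorem 4.9: gluing a family of operators. Given bounded complete
`n`-circled domains `G₁, G₂`, polyradii `ρ(k)` with `P(ρ(k)) ⊆ G₁` and
`|z^k| ≤ ρ(k)^k` on `G₁` for each `k ∈ M`, and linear operators `A_k` mapping
functions holomorphic on `P(ρ(k))` to functions holomorphic on `G₂` with the uniform
bounds `‖A_k f‖_{t•cl G₂} ≤ C ‖f‖_{s•cl P(ρ(k))}`, there is a bounded linear operator
`A : H(G₁) → H(G₂)` whose restriction to each `H_k(G₁)` agrees with `A_k`. -/
theorem stmt_16 (n : ℕ) (G1 G2 : Set (Fin n → ℂ))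
    (hop1 : IsOpen G1) (hconn1 : IsConnected G1) (hbd1 : Bornology.IsBounded G1)
    (hne1 : G1.Nonempty)
    (hcirc1 : ∀ z ∈ G1, ∀ w : Fin n → ℂ, (∀ j, ‖w j‖ ≤ ‖z j‖) → w ∈ G1)
    (hop2 : IsOpen G2) (hconn2 : IsConnected G2) (hbd2 : Bornology.IsBounded G2)
    (hne2 : G2.Nonempty)
    (hcirc2 : ∀ z ∈ G2, ∀ w : Fin n → ℂ, (∀ j, ‖w j‖ ≤ ‖z j‖) → w ∈ G2)
    (ρ : (Fin n → ℕ) → Fin n → ℝ)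
    (hρ : ∀ k : Fin n → ℕ, k ≠ 0 → Finset.univ.gcd k = 1 →
      (∀ j, 0 < ρ k j) ∧ {z : Fin n → ℂ | ∀ j, ‖z j‖ < ρ k j} ⊆ G1 ∧
        ∀ z ∈ G1, ‖∏ j, z j ^ k j‖ ≤ ∏ j, ρ k j ^ k j)
    (hexp : ∀ f : (Fin n → ℂ) → ℂ, DifferentiableOn ℂ f G1 →
      ∃ c : (Fin n → ℕ) → ℂ, ∀ z ∈ G1,
        Summable (fun m : Fin n → ℕ => ‖c m * ∏ j, z j ^ m j‖) ∧
        HasSum (fun m : Fin n → ℕ => c m * ∏ j, z j ^ m j) (f z))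
    (A : (Fin n → ℕ) → ((Fin n → ℂ) → ℂ) →ₗ[ℂ] ((Fin n → ℂ) → ℂ))
    (hA1 : ∀ k : Fin n → ℕ, k ≠ 0 → Finset.univ.gcd k = 1 →
      ∀ f : (Fin n → ℂ) → ℂ,
        DifferentiableOn ℂ f {z : Fin n → ℂ | ∀ j, ‖z j‖ < ρ k j} →
        DifferentiableOn ℂ (A k f) G2)
    (hA2 : ∀ t ∈ Set.Ioo (0 : ℝ) 1, ∃ C > (0 : ℝ), ∃ s ∈ Set.Ioo (0 : ℝ) 1,
      ∀ k : Fin n → ℕ, k ≠ 0 → Finset.univ.gcd k = 1 →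
      ∀ f : (Fin n → ℂ) → ℂ,
        DifferentiableOn ℂ f {z : Fin n → ℂ | ∀ j, ‖z j‖ < ρ k j} →
        (⨆ z ∈ t • closure G2, ‖A k f z‖) ≤
          C * ⨆ z ∈ s • closure {z : Fin n → ℂ | ∀ j, ‖z j‖ < ρ k j}, ‖f z‖) :
    ∃ B : ((Fin n → ℂ) → ℂ) →ₗ[ℂ] ((Fin n → ℂ) → ℂ),
      (∀ f : (Fin n → ℂ) → ℂ,
        DifferentiableOn ℂ f G1 → DifferentiableOn ℂ (B f) G2) ∧
      (∀ t ∈ Set.Ioo (0 : ℝ) 1, ∃ C' > (0 : ℝ), ∃ r ∈ Set.Ioo (0 : ℝ) 1,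
        ∀ f : (Fin n → ℂ) → ℂ, DifferentiableOn ℂ f G1 →
          (⨆ z ∈ t • closure G2, ‖B f z‖) ≤ C' * ⨆ z ∈ r • closure G1, ‖f z‖) ∧
      (∀ k : Fin n → ℕ, k ≠ 0 → Finset.univ.gcd k = 1 →
        ∀ f : (Fin n → ℂ) → ℂ, DifferentiableOn ℂ f G1 →
          (∃ c : ℕ → ℂ, ∀ z ∈ G1,
            Summable (fun l : ℕ => ‖c (l + 1) * ∏ j, z j ^ ((l + 1) * k j)‖) ∧
            HasSum (fun l : ℕ => c (l + 1) * ∏ j, z j ^ ((l + 1) * k j)) (f z)) →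
          ∀ z ∈ G2, B f z = A k f z) := by
  obtain ⟨B, hB, hBb, hBA⟩ := stmt_16_general
    (κ := {k : Fin n → ℕ // k ≠ 0 ∧ Finset.univ.gcd k = 1}) (S := fun k ↦ ray k.1)
    (ρ := fun k ↦ ρ k) (A := fun k ↦ A k) hop1 hbd1 hcirc1 hne1 hop2 hbd2
    (fun t ht ↦ IsCompleteReinhardt.smul_closure_subset hcirc2 ht) pairwise_disjoint_ray
    (fun k ↦ (hρ k k.2.1 k.2.2).1) (fun k ↦ (hρ k k.2.1 k.2.2).2.1)
    (fun f hf ↦ (hexp f hf).imp fun c hc z hz ↦ (hc z hz).2)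
    (fun k ↦ hA1 k k.2.1 k.2.2) fun t ht ↦ by
      obtain ⟨C, hC, s, hs, hle⟩ := hA2 t ht
      exact ⟨C, hC, s, hs, fun k ↦ hle k k.2.1 k.2.2⟩
  refine ⟨B, hB, hBb, fun k hk hk1 f _ ⟨c, hc⟩ ↦ ?_⟩
  obtain ⟨c', hc', hcS⟩ := exists_hasMonomialExpansionOn_ray hk fun z hz ↦ (hc z hz).2
  exact hBA ⟨k, hk, hk1⟩ f c' hc' hcS
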